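/- Let α : 𝕊¹ → 𝕊²₁ be a closed spacelike C¹ curve which is injective (an embedding), and let Γ = α(𝕊¹). Then the restriction of π to Γ is a bijection of Γ onto the waist C; consequently Γ is a geodesic graph over C, i.e. there is a function u : C → ℝ such that Γ = { cosh(u(q))·q + sinh(u(q))·a : q ∈ C }. -/

import Mathlib

/-!
If α is a closed embedded (injective on 𝕊¹ = ℝ/Tℤ) spacelike C¹ curve on the
pseudosphere with image Γ, then π restricted to Γ is a bijection onto the
waist C, and Γ is a geodesic graph on C: Γ = {cosh(u(q))·q + sinh(u(q))·a : q ∈ C}.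
-/

/-- The Lorentzian inner product on ℝ³. -/
def lorentz (x y : Fin 3 → ℝ) : ℝ := x 0 * y 0 + x 1 * y 1 - x 2 * y 2

/-- The timelike vector a = (0,0,1). -/
def aVec : Fin 3 → ℝ := ![0, 0, 1]

/-- The unit pseudosphere (de Sitter surface) 𝕊²₁. -/
def pseudoSphere : Set (Fin 3 → ℝ) := {x | lorentz x x = 1}

/-- The waist C of the pseudosphere: the unit circle in the plane x₃ = 0. -/
def waist : Set (Fin 3 → ℝ) := {x | lorentz x x = 1 ∧ x 2 = 0}

/-- Geodesic projection π(p) = (p + ⟨p,a⟩a)/√(1 + ⟨p,a⟩²). -/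
noncomputable def piProj (p : Fin 3 → ℝ) : Fin 3 → ℝ :=
  (1 / Real.sqrt (1 + (lorentz p aVec) ^ 2)) • (p + (lorentz p aVec) • aVec)

/-!
A tangent vector of the pseudosphere with no azimuthal component is timelike or zero, so the
azimuth along a spacelike curve has nowhere vanishing derivative. In the coordinates (azimuth,
height) on the cylinder a closed spacelike curve is therefore a closed curve whose angle lifts to a
homeomorphism of `ℝ`, and such a curve can be simple only if it winds around the cylinder exactly
once.
-/

open Set Function

section CircleLift

theorem exists_apply_eq_of_isCompact_range {X β : Type*} [TopologicalSpace X]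
    [PreconnectedSpace X] [Nonempty X] [LinearOrder β] [TopologicalSpace β]
    [OrderClosedTopology β] {h : X → β} (hh : Continuous h) (hcompact : IsCompact (range h))
    {φ : X → X} (hφ : Continuous φ) : ∃ x, h (φ x) = h x := by
  obtain ⟨_, ⟨xmin, rfl⟩, hmin⟩ := hcompact.exists_isLeast (range_nonempty h)
  obtain ⟨_, ⟨xmax, rfl⟩, hmax⟩ := hcompact.exists_isGreatest (range_nonempty h)
  exact intermediate_value_univ₂ (hh.comp hφ) hh
    (hmax (mem_range_self _)) (hmin (mem_range_self _))

theorem surjective_of_map_add_eq_add {f : ℝ → ℝ} {T d : ℝ} (hf : Continuous f) (hd : d ≠ 0)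
    (hfT : ∀ s, f (s + T) = f s + d) : Surjective f := by
  wlog hpos : 0 < d generalizing T d
  · have hneg (s : ℝ) : f (s + -T) = f s + -d := by
      have hstep := hfT (s + -T)
      rw [neg_add_cancel_right] at hstep
      linarith
    exact this (neg_ne_zero.2 hd) hneg (neg_pos.2 (lt_of_le_of_ne (not_lt.1 hpos) hd))
  let F : AddConstMap ℝ ℝ T d := ⟨f, hfT⟩
  have hF (n : ℤ) : f (n • T) = f 0 + n * d := by
    rw [← zsmul_eq_mul]
    exact AddConstMapClass.map_zsmul_const F n
  intro v
  obtain ⟨m, hm⟩ := exists_int_le ((v - f 0) / d)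
  obtain ⟨n, hn⟩ := exists_int_ge ((v - f 0) / d)
  rw [le_div_iff₀ hpos] at hm
  rw [div_le_iff₀ hpos] at hn
  refine mem_range_of_exists_le_of_exists_ge hf ⟨m • T, ?_⟩ ⟨n • T, ?_⟩
  · rw [hF]; linarith
  · rw [hF]; linarith

theorem coe_addCircle_eq_iff {P x y : ℝ} :
    (x : AddCircle P) = y ↔ ∃ n : ℤ, y = x + n • P :=
  AddCommGroup.modEq_iff_eq_mod_zmultiples.symm.trans AddCommGroup.modEq_iff_eq_add_zsmul

theorem exists_map_add_eq_add_zsmul {θ : ℝ → ℝ} {T P : ℝ} (hθ : Continuous θ)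
    (hper : Periodic (fun s => (θ s : AddCircle P)) T) :
    ∃ k : ℤ, ∀ s, θ (s + T) = θ s + k • P := by
  obtain ⟨k, hk⟩ := coe_addCircle_eq_iff.1 (hper 0).symm
  refine ⟨k, congrFun ((AddCircle.isCoveringMap_coe P).eq_of_comp_eq (by fun_prop)
    (hθ.add continuous_const) (funext fun s => ?_) 0 hk)⟩
  exact (hper s).trans (coe_addCircle_eq_iff.2 ⟨k, rfl⟩)

theorem surjective_of_periodic_coe {θ : ℝ → ℝ} {T P : ℝ} (hT : T ≠ 0) (hθ : Continuous θ)
    (hinj : Injective θ) (hper : Periodic (fun s => (θ s : AddCircle P)) T) :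
    Surjective θ := by
  obtain ⟨k, hk⟩ := exists_map_add_eq_add_zsmul hθ hper
  refine surjective_of_map_add_eq_add hθ (fun hzero => hT ?_) hk
  exact add_eq_left.1 (hinj ((hk 0).trans (by rw [hzero, add_zero])))

/-- Move every point of the curve `s ↦ (θ s, h s)` on the cylinder along the curve until its angle
has grown by a full turn `P`. At some point the height is unchanged, since the maximum cannot go up
nor the minimum down; as the curve is simple, `P` is there the increment of `θ` over `n` periods.
By uniqueness of lifts this holds everywhere: a full turn is always `n` periods of the curve. -/
theorem coe_eq_coe_of_simple_on_cylinder {β : Type*} [LinearOrder β] [TopologicalSpace β]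
    [OrderClosedTopology β] {θ : ℝ → ℝ} {h : ℝ → β} {T P : ℝ} (hT : T ≠ 0)
    (hθ : IsHomeomorph θ) (hh : Continuous h)
    (hθper : Periodic (fun s => (θ s : AddCircle P)) T) (hhper : Periodic h T)
    (hsimple : ∀ s t, (θ s : AddCircle P) = θ t → h s = h t → (s : AddCircle T) = t)
    {s t : ℝ} (hst : (θ s : AddCircle P) = θ t) : (s : AddCircle T) = t := by
  let slide (s : ℝ) : ℝ := hθ.homeomorph.symm (θ s + P)
  have θ_slide (s : ℝ) : θ (slide s) = θ s + P := hθ.homeomorph.apply_symm_apply _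
  have slide_cont : Continuous slide :=
    hθ.homeomorph.symm.continuous.comp (hθ.continuous.add continuous_const)
  obtain ⟨s₀, hs₀⟩ := exists_apply_eq_of_isCompact_range hh
    (hhper.compact_of_continuous hT hh) slide_cont
  obtain ⟨n, hn⟩ : ∃ n : ℤ, slide s₀ = s₀ + n • T :=
    coe_addCircle_eq_iff.1 <| hsimple _ _ (by simp [θ_slide]) hs₀.symm
  have θ_add : ∀ s, θ (s + n • T) = θ s + P := by
    refine congrFun ((AddCircle.isCoveringMap_coe P).eq_of_comp_eq
      (hθ.continuous.comp (continuous_id.add continuous_const))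
      (hθ.continuous.add continuous_const) (funext fun s => ?_) s₀ (hn ▸ θ_slide s₀))
    simpa using (hθper.zsmul n) s
  obtain ⟨m, hm⟩ := coe_addCircle_eq_iff.1 hst
  let F : AddConstMap ℝ ℝ (n • T) P := ⟨θ, θ_add⟩
  have ht : t = s + m • n • T :=
    hθ.injective (hm.trans (AddConstMapClass.map_add_zsmul F s m).symm)
  exact coe_addCircle_eq_iff.2 ⟨m * n, by rw [ht, mul_smul]⟩

theorem injective_of_hasDerivAt_ne_zero {f f' : ℝ → ℝ} (hf : ∀ s, HasDerivAt f (f' s) s)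
    (hf' : ∀ s, f' s ≠ 0) : Injective f := by
  have hcont : Continuous f := continuous_iff_continuousAt.2 fun s => (hf s).continuousAt
  refine Injective.of_lt_imp_ne fun s t hst heq => ?_
  obtain ⟨c, -, hc⟩ := exists_hasDerivAt_eq_zero hst hcont.continuousOn heq fun x _ => hf x
  exact hf' c hc

theorem isHomeomorph_of_periodic_coe_of_hasStrictDerivAt {θ θ' : ℝ → ℝ} {T P : ℝ} (hT : T ≠ 0)
    (hθ : ∀ s, HasStrictDerivAt θ (θ' s) s) (hθ' : ∀ s, θ' s ≠ 0)
    (hper : Periodic (fun s => (θ s : AddCircle P)) T) : IsHomeomorph θ := by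
  have hcont : Continuous θ := continuous_iff_continuousAt.2 fun s => (hθ s).hasDerivAt.continuousAt
  have hinj : Injective θ := injective_of_hasDerivAt_ne_zero (fun s => (hθ s).hasDerivAt) hθ'
  exact ⟨hcont, isOpenMap_of_hasStrictDerivAt hθ hθ', hinj,
    surjective_of_periodic_coe hT hcont hinj hper⟩

end CircleLift

section PolarAngle

variable {w w' : ℝ → ℂ}

theorem exists_hasStrictDerivAt_exp_eq (hw : ∀ s, HasDerivAt w (w' s) s) (hw' : Continuous w')
    (hw0 : ∀ s, w s ≠ 0) :
    ∃ L : ℝ → ℂ, (∀ s, HasStrictDerivAt L (w' s / w s) s) ∧ ∀ s, Complex.exp (L s) = w s := by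
  have hcont : Continuous w := continuous_iff_continuousAt.2 fun s => (hw s).continuousAt
  let L (s : ℝ) : ℂ := Complex.log (w 0) + ∫ t in (0 : ℝ)..s, w' t / w t
  have hL (s : ℝ) : HasStrictDerivAt L (w' s / w s) s :=
    ((hw'.div hcont hw0).integral_hasStrictDerivAt 0 s).const_add _
  have hquot (s : ℝ) : HasDerivAt (fun s => w s * Complex.exp (-L s)) 0 s :=
    ((hw s).mul (hL s).hasDerivAt.neg.cexp).congr_deriv (by field_simp [hw0 s]; ring)
  refine ⟨L, hL, fun s => ?_⟩
  have hconst : w s * Complex.exp (-L s) = w 0 * Complex.exp (-L 0) :=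
    is_const_of_deriv_eq_zero (fun s => (hquot s).differentiableAt)
      (fun s => (hquot s).deriv) s 0
  have hL0 : Complex.exp (L 0) = w 0 := by simp [L, Complex.exp_log (hw0 0)]
  rw [Complex.exp_neg, Complex.exp_neg, hL0, mul_inv_cancel₀ (hw0 0)] at hconst
  exact (eq_of_div_eq_one hconst).symm

theorem exists_hasStrictDerivAt_coe_eq_arg (hw : ∀ s, HasDerivAt w (w' s) s)
    (hw' : Continuous w') (hw0 : ∀ s, w s ≠ 0) :
    ∃ θ : ℝ → ℝ, (∀ s, HasStrictDerivAt θ (w' s / w s).im s) ∧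
      ∀ s, (θ s : Real.Angle) = Complex.arg (w s) := by
  obtain ⟨L, hL, hexp⟩ := exists_hasStrictDerivAt_exp_eq hw hw' hw0
  refine ⟨fun s => (L s).im, fun s =>
    Complex.imCLM.hasStrictFDerivAt.comp_hasStrictDerivAt s (hL s), fun s => ?_⟩
  rw [← hexp, Complex.arg_exp, Real.Angle.coe_toIocMod]

end PolarAngle

section Pseudosphere

variable {p q v : Fin 3 → ℝ}

/-- The projection `𝕃³ → ℂ` along the timelike axis `aVec`, the plane `x₃ = 0` being identified
with `ℂ` so that angles around the axis are arguments. -/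
noncomputable def horizontal : (Fin 3 → ℝ) →L[ℝ] ℂ :=
  Complex.equivRealProdCLM.symm.toContinuousLinearMap ∘L
    (ContinuousLinearMap.proj 0).prod (ContinuousLinearMap.proj 1)

@[simp]
theorem horizontal_re (p : Fin 3 → ℝ) : (horizontal p).re = p 0 := by simp [horizontal]

@[simp]
theorem horizontal_im (p : Fin 3 → ℝ) : (horizontal p).im = p 1 := by simp [horizontal]

/-- The angle of a point around the timelike axis. -/
noncomputable def azimuth (p : Fin 3 → ℝ) : Real.Angle := Complex.arg (horizontal p)

/-- The point of the waist with a given azimuth. -/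
noncomputable def waistPoint (φ : Real.Angle) : Fin 3 → ℝ := ![φ.cos, φ.sin, 0]

theorem sq_add_sq_of_mem_pseudoSphere (hp : p ∈ pseudoSphere) :
    p 0 ^ 2 + p 1 ^ 2 = 1 + p 2 ^ 2 := by
  have : p 0 * p 0 + p 1 * p 1 - p 2 * p 2 = 1 := hp
  linarith

theorem norm_horizontal (hp : p ∈ pseudoSphere) : ‖horizontal p‖ = √(1 + p 2 ^ 2) := by
  rw [Complex.norm_eq_sqrt_sq_add_sq, horizontal_re, horizontal_im,
    sq_add_sq_of_mem_pseudoSphere hp]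

theorem horizontal_ne_zero (hp : p ∈ pseudoSphere) : horizontal p ≠ 0 := by
  rw [← norm_ne_zero_iff, norm_horizontal hp]
  positivity

theorem piProj_eq (p : Fin 3 → ℝ) :
    piProj p = ![p 0 / √(1 + p 2 ^ 2), p 1 / √(1 + p 2 ^ 2), 0] := by
  ext i
  fin_cases i <;> simp [piProj, lorentz, aVec, div_eq_inv_mul, Matrix.vecHead, Matrix.vecTail]

theorem piProj_eq_waistPoint_azimuth (hp : p ∈ pseudoSphere) :
    piProj p = waistPoint (azimuth p) := by
  rw [piProj_eq, waistPoint, azimuth, Real.Angle.cos_coe, Real.Angle.sin_coe,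
    Complex.cos_arg (horizontal_ne_zero hp), Complex.sin_arg, norm_horizontal hp,
    horizontal_re, horizontal_im]

theorem cosh_arsinh_smul_piProj_add (p : Fin 3 → ℝ) :
    Real.cosh (Real.arsinh (p 2)) • piProj p + Real.sinh (Real.arsinh (p 2)) • aVec = p := by
  have hne : √(1 + p 2 ^ 2) ≠ 0 := by positivity
  rw [piProj_eq, Real.cosh_arsinh, Real.sinh_arsinh]
  ext i
  fin_cases i <;> simp [aVec, mul_div_cancel₀, hne]

theorem eq_of_piProj_eq (hproj : piProj p = piProj q) (hheight : p 2 = q 2) : p = q := by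
  rw [← cosh_arsinh_smul_piProj_add p, hproj, hheight, cosh_arsinh_smul_piProj_add]

theorem piProj_of_mem_waist (hq : q ∈ waist) : piProj q = q := by
  simpa [hq.2] using cosh_arsinh_smul_piProj_add q

theorem bijOn_waistPoint : BijOn waistPoint univ waist := by
  refine ⟨fun φ _ => ⟨?_, by simp [waistPoint]⟩, fun φ _ ψ _ h => ?_, fun q hq => ?_⟩
  · simpa [lorentz, waistPoint, sq] using φ.cos_sq_add_sin_sq
  · induction φ using Real.Angle.induction_on with | _ x
    induction ψ using Real.Angle.induction_on with | _ y
    exact Real.Angle.cos_sin_inj (congrFun h 0) (congrFun h 1)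
  · exact ⟨azimuth q, mem_univ _,
      (piProj_eq_waistPoint_azimuth hq.1).symm.trans (piProj_of_mem_waist hq)⟩

-- Lagrange's identity in the plane, after eliminating the horizontal inner products
-- by `lorentz p p = 1` and `lorentz p v = 0`.
theorem sq_horizontal_det_eq (hp : p ∈ pseudoSphere) (hpv : lorentz p v = 0) :
    (p 0 * v 1 - p 1 * v 0) ^ 2 = (1 + p 2 ^ 2) * lorentz v v + v 2 ^ 2 := by
  have hnorm := sq_add_sq_of_mem_pseudoSphere hp
  simp only [lorentz] at hpv ⊢
  linear_combination (v 0 ^ 2 + v 1 ^ 2) * hnorm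
    - (p 0 * v 0 + p 1 * v 1 + p 2 * v 2) * hpv

theorem im_horizontal_div_ne_zero (hp : p ∈ pseudoSphere) (hpv : lorentz p v = 0)
    (hv : 0 < lorentz v v) : (horizontal v / horizontal p).im ≠ 0 := by
  have hdet : p 0 * v 1 - p 1 * v 0 ≠ 0 := by
    rw [← sq_pos_iff, sq_horizontal_det_eq hp hpv]
    positivity
  have hnormSq : Complex.normSq (horizontal p) ≠ 0 :=
    Complex.normSq_eq_zero.not.2 (horizontal_ne_zero hp)
  have him : (horizontal v / horizontal p).im
      = (p 0 * v 1 - p 1 * v 0) / Complex.normSq (horizontal p) := by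
    rw [Complex.div_im, horizontal_re, horizontal_im, horizontal_re, horizontal_im]
    ring
  rw [him]
  exact div_ne_zero hdet hnormSq

/-- The geodesic graph of `u` over the waist; the values of `u` off the waist are irrelevant. -/
def geodesicGraph (u : (Fin 3 → ℝ) → ℝ) : Set (Fin 3 → ℝ) :=
  {x | ∃ q ∈ waist, x = Real.cosh (u q) • q + Real.sinh (u q) • aVec}

theorem exists_eq_geodesicGraph_of_bijOn {Γ : Set (Fin 3 → ℝ)} (hΓ : BijOn piProj Γ waist) :
    ∃ u : (Fin 3 → ℝ) → ℝ, Γ = geodesicGraph u := by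
  have hinv := hΓ.invOn_invFunOn
  refine ⟨fun q => Real.arsinh (invFunOn piProj Γ q 2), ?_⟩
  refine (hΓ.symm hinv.symm).image_eq.symm.trans (ext fun x => ?_)
  refine exists_congr fun q => and_congr_right fun hq => ?_
  have hlift := cosh_arsinh_smul_piProj_add (invFunOn piProj Γ q)
  rw [hinv.2 hq] at hlift
  rw [hlift, eq_comm]

end Pseudosphere

section SpacelikeCurve

variable {α : ℝ → Fin 3 → ℝ} {T : ℝ}

theorem lorentz_deriv_eq_zero {s : ℝ} (hα : DifferentiableAt ℝ α s)
    (hS : ∀ s, α s ∈ pseudoSphere) : lorentz (α s) (deriv α s) = 0 := by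
  have hd := hasDerivAt_pi.1 hα.hasDerivAt
  have hderiv := (((hd 0).mul (hd 0)).add ((hd 1).mul (hd 1))).sub ((hd 2).mul (hd 2))
  have hzero := hderiv.unique ((hasDerivAt_const s (1 : ℝ)).congr_of_eventuallyEq
    (.of_forall hS))
  simp only [lorentz]
  linarith

theorem exists_isHomeomorph_coe_eq_azimuth (hT : T ≠ 0) (hper : Periodic α T)
    (hα : ContDiff ℝ 1 α) (hS : ∀ s, α s ∈ pseudoSphere)
    (hsp : ∀ s, 0 < lorentz (deriv α s) (deriv α s)) :
    ∃ θ : ℝ → ℝ, IsHomeomorph θ ∧ ∀ s, (θ s : Real.Angle) = azimuth (α s) := by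
  have hdiff : Differentiable ℝ α := hα.differentiable one_ne_zero
  obtain ⟨θ, hθ, hazimuth⟩ := exists_hasStrictDerivAt_coe_eq_arg
    (fun s => horizontal.hasFDerivAt.comp_hasDerivAt s (hdiff s).hasDerivAt)
    (horizontal.continuous.comp (hα.continuous_deriv le_rfl))
    (fun s => horizontal_ne_zero (hS s))
  have hθper : Periodic (fun s => (θ s : Real.Angle)) T := fun s => by
    simp only [hazimuth, comp_apply, hper s]
  refine ⟨θ, ?_, hazimuth⟩
  exact isHomeomorph_of_periodic_coe_of_hasStrictDerivAt (P := 2 * Real.pi) hT hθ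
    (fun s => im_horizontal_div_ne_zero (hS s) (lorentz_deriv_eq_zero (hdiff s) hS) (hsp s)) hθper

theorem bijOn_azimuth_range (hT : T ≠ 0) (hper : Periodic α T)
    (hα : ContDiff ℝ 1 α) (hS : ∀ s, α s ∈ pseudoSphere)
    (hsp : ∀ s, 0 < lorentz (deriv α s) (deriv α s))
    (hinj : ∀ s t, α s = α t → (s : AddCircle T) = t) :
    BijOn azimuth (range α) univ := by
  obtain ⟨θ, hθ, hazimuth⟩ := exists_isHomeomorph_coe_eq_azimuth hT hper hα hS hsp
  refine ⟨mapsTo_univ _ _, ?_, fun φ _ => ?_⟩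
  · rintro _ ⟨s, rfl⟩ _ ⟨t, rfl⟩ hst
    have hsimple (s t : ℝ) (hst : (θ s : Real.Angle) = θ t) (hheight : α s 2 = α t 2) :
        (s : AddCircle T) = t := by
      refine hinj s t (eq_of_piProj_eq ?_ hheight)
      rw [piProj_eq_waistPoint_azimuth (hS s), piProj_eq_waistPoint_azimuth (hS t),
        ← hazimuth, ← hazimuth, hst]
    have hθper : Periodic (fun s => (θ s : Real.Angle)) T := fun s => by
      simp only [hazimuth, hper s]
    have hcoe : (s : AddCircle T) = t :=
      coe_eq_coe_of_simple_on_cylinder (P := 2 * Real.pi) hT hθ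
        ((continuous_apply 2).comp hα.continuous) hθper (fun s => congrFun (hper s) 2) hsimple
        ((hazimuth s).trans (hst.trans (hazimuth t).symm))
    exact congrArg hper.lift hcoe
  · induction φ using Real.Angle.induction_on with | _ x
    obtain ⟨s, rfl⟩ := hθ.surjective x
    exact ⟨α s, mem_range_self s, (hazimuth s).symm⟩

end SpacelikeCurve

theorem stmt_7 (T : ℝ) (hT : 0 < T) (α : ℝ → (Fin 3 → ℝ))
    (hper : Function.Periodic α T) (hα : ContDiff ℝ 1 α)
    (hS : ∀ s : ℝ, α s ∈ pseudoSphere)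
    (hsp : ∀ s : ℝ, 0 < lorentz (deriv α s) (deriv α s))
    (hinj : ∀ s t : ℝ, α s = α t → (s : AddCircle T) = (t : AddCircle T)) :
    Set.BijOn piProj (Set.range α) waist ∧
    ∃ u : (Fin 3 → ℝ) → ℝ,
      Set.range α =
        {x | ∃ q ∈ waist, x = Real.cosh (u q) • q + Real.sinh (u q) • aVec} := by
  have hazimuth : BijOn azimuth (range α) univ :=
    bijOn_azimuth_range hT.ne' hper hα hS hsp hinj
  have hproj : BijOn piProj (range α) waist := by
    refine (bijOn_waistPoint.comp hazimuth).congr ?_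
    rintro _ ⟨s, rfl⟩
    exact (piProj_eq_waistPoint_azimuth (hS s)).symm
  exact ⟨hproj, exists_eq_geodesicGraph_of_bijOn hproj⟩
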